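/- Under the static spherically symmetric Einstein equations with the NEC, asymptotic flatness, and a regular horizon at r_h, the ADM mass satisfies the Penrose-like inequality 3M ≥ κ𝒜/(4π) + √(𝒜/(4π)), i.e. 3M ≥ κ r_h² + r_h. -/

import Mathlib

open Real Filter

/-!
Six times the quasi-local mass is
`r e^{-χ/2} (1 - 3 f + 8π r² p_r) + 2 r`, and the field equations give it the derivative
`2 (1 - e^{-χ/2}) + 16π r² e^{-χ/2} (ρ + p_T)`: every term with a factor `1 / f` cancels
(`hasDerivAt_mass`). The NEC makes `χ` nonincreasing, and since `χ → 0` at infinity this forces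
`χ ≥ 0`, hence `e^{-χ/2} ≤ 1`. With `ρ + p_T ≥ 0` the mass is therefore nondecreasing and `M` is at
least its horizon value. Letting `r → r_h` in the equation for `f'` identifies
`f'(r_h) = (1 - 8π r_h² ρ(r_h)) / r_h = (1 + 8π r_h² p_r(r_h)) / r_h`, so that three times the mass
at the horizon is exactly `κ r_h² + r_h`.
-/

/-- Derivative of the quasi-local mass along the field equations: its sign is controlled by
`e^{-χ/2} ≤ 1` and by the tangential NEC alone, because the terms containing `1 / f` cancel. -/
lemma hasDerivAt_mass {f χ p : ℝ → ℝ} {r ρ pT : ℝ} (hr : r ≠ 0) (hf0 : f r ≠ 0)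
    (hf : HasDerivAt f ((1 - 8 * π * r ^ 2 * ρ - f r) / r) r)
    (hχ : HasDerivAt χ (-(8 * π * r / f r) * (ρ + p r)) r)
    (hp : HasDerivAt p ((ρ + 4 * pT - 3 * p r) / (2 * r) -
        (p r + ρ) * (8 * π * p r * r ^ 2 + 1) / (2 * r * f r)) r) :
    HasDerivAt (fun x => (x * Real.exp (-χ x / 2) / 6) *
        (1 - 3 * f x + 8 * π * x ^ 2 * p x) + x / 3)
      ((1 - Real.exp (-χ r / 2)) / 3 + 8 * π * r ^ 2 * Real.exp (-χ r / 2) * (ρ + pT) / 3) r := by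
  have hid := hasDerivAt_id' r
  have h := (((hid.mul (hχ.neg.div_const 2).exp).div_const 6).mul
    (((hf.const_mul 3).const_sub 1).add (((hid.pow 2).const_mul (8 * π)).mul hp))).add
      (hid.div_const 3)
  refine h.congr_deriv ?_
  simp only [Pi.mul_apply, Pi.add_apply, Pi.neg_apply, Pi.pow_apply]
  push_cast
  field_simp
  ring

/-- The one-sided derivative of `f` at the horizon is the limit of the right-hand side of the
equation for `f'`. -/
lemma horizon_deriv {r_h fd : ℝ} {f ρ : ℝ → ℝ} (hr : 0 < r_h)
    (hf' : ∀ r ∈ Set.Ioi r_h, HasDerivAt f ((1 - 8 * π * r ^ 2 * ρ r - f r) / r) r)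
    (hfc : ContinuousWithinAt f (Set.Ici r_h) r_h)
    (hρc : ContinuousWithinAt ρ (Set.Ici r_h) r_h)
    (hfd : HasDerivWithinAt f fd (Set.Ici r_h) r_h) :
    fd = (1 - 8 * π * r_h ^ 2 * ρ r_h - f r_h) / r_h := by
  have hc : ContinuousWithinAt (fun r => (1 - 8 * π * r ^ 2 * ρ r - f r) / r)
      (Set.Ici r_h) r_h := by
    have hid : ContinuousWithinAt (fun r : ℝ => r) (Set.Ici r_h) r_h := continuousWithinAt_id
    exact ((continuousWithinAt_const.sub
      ((continuousWithinAt_const.mul (hid.pow 2)).mul hρc)).sub hfc).div hid hr.ne'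
  have ht := (hc.mono Set.Ioi_subset_Ici_self).tendsto
  have hd : HasDerivWithinAt f ((1 - 8 * π * r_h ^ 2 * ρ r_h - f r_h) / r_h)
      (Set.Ici r_h) r_h := by
    refine hasDerivWithinAt_Ici_of_tendsto_deriv (s := Set.Ioi r_h)
      (fun r hr' => (hf' r hr').differentiableAt.differentiableWithinAt)
      (hfc.mono Set.Ioi_subset_Ici_self) self_mem_nhdsWithin ?_
    refine ht.congr' ?_
    filter_upwards [self_mem_nhdsWithin] with r hr'
    exact (hf' r hr').deriv.symm
  exact (uniqueDiffWithinAt_Ici r_h).eq_deriv _ hfd hd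

/-- Static spherically symmetric black hole (units 16πG = c = 1): under the Einstein
equations with the NEC, asymptotic flatness (`f → 1`, `χ → 0`), ADM mass
`M = lim_{r→∞} m(r)`, and a regular horizon at `r_h` (`f(r_h) = 0`, NEC saturated there),
the Penrose-like inequality `3M ≥ κ𝒜/(4π) + √(𝒜/(4π))`, i.e. `3M ≥ κ r_h² + r_h`, holds,
where `κ = f'(r_h) e^{−χ(r_h)/2}/2` and `𝒜 = 4π r_h²`. -/
theorem penrose_like_static (r_h M κ 𝒜 fd : ℝ) (hr : 0 < r_h) (f χ ρ p_r p_T : ℝ → ℝ)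
    (hf : ∀ r ∈ Set.Ioi r_h, 0 < f r)
    (hf' : ∀ r ∈ Set.Ioi r_h,
      HasDerivAt f ((1 - 8 * π * r ^ 2 * ρ r - f r) / r) r)
    (hχ' : ∀ r ∈ Set.Ioi r_h,
      HasDerivAt χ (-(8 * π * r / f r) * (ρ r + p_r r)) r)
    (hp' : ∀ r ∈ Set.Ioi r_h,
      HasDerivAt p_r ((ρ r + 4 * p_T r - 3 * p_r r) / (2 * r) -
        (p_r r + ρ r) * (8 * π * p_r r * r ^ 2 + 1) / (2 * r * f r)) r)
    (hNEC₁ : ∀ r ∈ Set.Ioi r_h, 0 ≤ ρ r + p_r r)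
    (hNEC₂ : ∀ r ∈ Set.Ioi r_h, 0 ≤ ρ r + p_T r)
    -- asymptotic flatness and ADM mass
    (hfinfty : Tendsto f atTop (nhds 1))
    (hχinfty : Tendsto χ atTop (nhds 0))
    (hM : Tendsto
      (fun x => (x * Real.exp (-χ x / 2) / 6) *
        (1 - 3 * f x + 8 * π * x ^ 2 * p_r x) + x / 3) atTop (nhds M))
    -- regular horizon at r_h
    (hfc : ContinuousWithinAt f (Set.Ici r_h) r_h)
    (hχc : ContinuousWithinAt χ (Set.Ici r_h) r_h)
    (hρc : ContinuousWithinAt ρ (Set.Ici r_h) r_h)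
    (hpc : ContinuousWithinAt p_r (Set.Ici r_h) r_h)
    (hfh : f r_h = 0)
    (hfd : HasDerivWithinAt f fd (Set.Ici r_h) r_h)
    (hNECh : ρ r_h + p_r r_h = 0)
    -- surface gravity and horizon area
    (hκ : κ = fd * Real.exp (-χ r_h / 2) / 2)
    (h𝒜 : 𝒜 = 4 * π * r_h ^ 2) :
    3 * M ≥ κ * 𝒜 / (4 * π) + Real.sqrt (𝒜 / (4 * π)) ∧
    3 * M ≥ κ * r_h ^ 2 + r_h := by
  have hχ0 : ∀ r ∈ Set.Ioi r_h, 0 ≤ χ r := by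
    intro r hr'
    have hanti : AntitoneOn χ (Set.Ioi r_h) := by
      refine antitoneOn_of_deriv_nonpos (convex_Ioi r_h)
        (fun x hx => (hχ' x hx).continuousAt.continuousWithinAt) ?_ ?_
      · rw [interior_Ioi]
        exact fun x hx => (hχ' x hx).differentiableAt.differentiableWithinAt
      · rw [interior_Ioi]
        intro x hx
        rw [(hχ' x hx).deriv, neg_mul]
        have hx0 : 0 < x := hr.trans hx
        have hfx := hf x hx
        have := hNEC₁ x hx
        exact neg_nonpos.2 (by positivity)
    refine le_of_tendsto hχinfty ?_
    filter_upwards [eventually_ge_atTop r] with s hs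
    exact hanti hr' (lt_of_lt_of_le hr' hs) hs
  have hmass : ∀ r ∈ Set.Ioi r_h, _ := fun r hr' =>
    hasDerivAt_mass (hr.trans hr').ne' (hf r hr').ne' (hf' r hr') (hχ' r hr') (hp' r hr')
  have hmono : MonotoneOn (fun x => (x * Real.exp (-χ x / 2) / 6) *
        (1 - 3 * f x + 8 * π * x ^ 2 * p_r x) + x / 3) (Set.Ici r_h) := by
    refine monotoneOn_of_deriv_nonneg (convex_Ici r_h) ?_ ?_ ?_
    · intro x hx
      rcases eq_or_lt_of_le (Set.mem_Ici.1 hx) with rfl | hx'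
      · have hid : ContinuousWithinAt (fun r : ℝ => r) (Set.Ici r_h) r_h := continuousWithinAt_id
        exact (((hid.mul (hχc.neg.div_const 2).rexp).div_const 6).mul
          ((continuousWithinAt_const.sub (continuousWithinAt_const.mul hfc)).add
            ((continuousWithinAt_const.mul (hid.pow 2)).mul hpc))).add (hid.div_const 3)
      · exact (hmass x hx').continuousAt.continuousWithinAt
    · rw [interior_Ici]
      exact fun x hx => (hmass x hx).differentiableAt.differentiableWithinAt
    · rw [interior_Ici]
      intro x hx
      rw [(hmass x hx).deriv]
      have hE : Real.exp (-χ x / 2) ≤ 1 := Real.exp_le_one_iff.2 (by linarith [hχ0 x hx])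
      have hN := hNEC₂ x hx
      have h1 : 0 ≤ 1 - Real.exp (-χ x / 2) := by linarith
      positivity
  have hle := ge_of_tendsto hM (by
    filter_upwards [eventually_ge_atTop r_h] with s hs
    exact hmono Set.self_mem_Ici hs hs)
  have hfd' := horizon_deriv hr hf' hfc hρc hfd
  have hρh : ρ r_h = -p_r r_h := by linarith
  have hmain : 3 * M ≥ κ * r_h ^ 2 + r_h := by
    have hval : κ * r_h ^ 2 + r_h = 3 * ((r_h * Real.exp (-χ r_h / 2) / 6) *
        (1 - 3 * f r_h + 8 * π * r_h ^ 2 * p_r r_h) + r_h / 3) := by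
      rw [hκ, hfd', hfh, hρh]
      field_simp
      ring
    rw [hval]
    linarith
  have hA : 𝒜 / (4 * π) = r_h ^ 2 := by
    rw [h𝒜]
    field_simp
  refine ⟨?_, hmain⟩
  rw [mul_div_assoc, hA, Real.sqrt_sq hr.le]
  exact hmain
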